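/- Let f₁, …, f_m : ℝ^d → ℝ be differentiable, with each f_i L_i-Lipschitz, each ∇f_i M_{i,inf}-Lipschitz, L_i ≤ L_max for all i, and fix constants M_i > M_{i,inf} for each i. Let x₀ satisfy f_i(x₀) < 0 for all i, let l* := min_{1≤i≤m} (−f_i(x₀))/L_max, and let ν be any step with 0 < ν ≤ 2 l*/√d. Then every x in ⋂_{i=1}^m {x : f_i(x₀) + ⟨∇^ν f_i(x₀), x − x₀⟩ + 2 M_i ‖x − x₀‖² ≤ 0} satisfies f_i(x) < 0 for all i = 1, …, m (strict feasibility). -/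

import Mathlib

open RealInnerProductSpace

/-- Forward-difference gradient estimator `∇^ν f(x) := Σ_j ((f(x + ν e_j) − f(x))/ν) e_j`. -/
noncomputable def fdGrad (d : ℕ) (f : EuclideanSpace ℝ (Fin d) → ℝ)
    (x : EuclideanSpace ℝ (Fin d)) (ν : ℝ) : EuclideanSpace ℝ (Fin d) :=
  ∑ j : Fin d, ((f (x + ν • EuclideanSpace.single j (1 : ℝ)) - f x) / ν) •
    EuclideanSpace.single j (1 : ℝ)

/-!
Let `r = √d ν / 2`, which is at most `l*`. If `‖x - x₀‖ < r`, the Lipschitz bound on `fᵢ` alone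
keeps `fᵢ x` negative. If `‖x - x₀‖ ≥ r`, the error `‖∇^ν fᵢ(x₀) - ∇fᵢ(x₀)‖ ≤ r Mᵢ,inf` of the
finite differences is at most `Mᵢ,inf ‖x - x₀‖`; together with the Taylor remainder
`Mᵢ,inf ‖x - x₀‖² / 2` it costs at most `(3/2) Mᵢ,inf ‖x - x₀‖²`, less than the quadratic term
`2 Mᵢ ‖x - x₀‖²` of the model.
-/

section Taylor

variable {E F : Type*} [NormedAddCommGroup E] [NormedAddCommGroup F]

theorem nonneg_of_norm_sub_le_mul_norm_sub {g : E → F} {K : ℝ} {x y : E} (hxy : x ≠ y)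
    (h : ‖g x - g y‖ ≤ K * ‖x - y‖) : 0 ≤ K :=
  nonneg_of_mul_nonneg_left ((norm_nonneg _).trans h) (norm_sub_pos_iff.2 hxy)

theorem norm_sub_sub_fderiv_apply_le [NormedSpace ℝ E] [NormedSpace ℝ F] {f : E → F} {K : ℝ} {x : E}
    (hf : Differentiable ℝ f) (hK : ∀ y, ‖fderiv ℝ f y - fderiv ℝ f x‖ ≤ K * ‖y - x‖) (y : E) :
    ‖f y - f x - fderiv ℝ f x (y - x)‖ ≤ K / 2 * ‖y - x‖ ^ 2 := by
  set v := y - x with hv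
  let remainder : ℝ → F := fun t ↦ f (x + t • v) - f x - t • fderiv ℝ f x v
  have hasDerivAt_remainder (t : ℝ) :
      HasDerivAt remainder ((fderiv ℝ f (x + t • v) - fderiv ℝ f x) v) t := by
    have hline : HasDerivAt (fun t : ℝ ↦ x + t • v) v t := by
      simpa using ((hasDerivAt_id t).smul_const v).const_add x
    exact ((((hf _).hasFDerivAt.comp_hasDerivAt t hline).sub_const (f x)).sub
      ((hasDerivAt_id t).smul_const (fderiv ℝ f x v))).congr_deriv (by simp)
  have hasDerivAt_bound (t : ℝ) :
      HasDerivAt (fun t ↦ K / 2 * ‖v‖ ^ 2 * t ^ 2) (K * (t * ‖v‖) * ‖v‖) t :=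
    ((hasDerivAt_pow 2 t).const_mul (K / 2 * ‖v‖ ^ 2)).congr_deriv (by ring)
  have norm_deriv_le : ∀ t ∈ Set.Ico (0 : ℝ) 1,
      ‖(fderiv ℝ f (x + t • v) - fderiv ℝ f x) v‖ ≤ K * (t * ‖v‖) * ‖v‖ := fun t ht ↦ by
    refine ContinuousLinearMap.le_of_opNorm_le _ ?_ v
    simpa [norm_smul, abs_of_nonneg ht.1] using hK (x + t • v)
  have norm_remainder_one_le := image_norm_le_of_norm_deriv_right_le_deriv_boundary
    (fun t _ ↦ (hasDerivAt_remainder t).continuousAt.continuousWithinAt)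
    (fun t _ ↦ (hasDerivAt_remainder t).hasDerivWithinAt)
    (by simp [remainder]) hasDerivAt_bound norm_deriv_le (Set.right_mem_Icc.2 zero_le_one)
  simpa [remainder, hv] using norm_remainder_one_le

variable [InnerProductSpace ℝ E] [CompleteSpace E] {f : E → ℝ} {K : ℝ} {x : E}

theorem abs_sub_sub_inner_gradient_le (hf : Differentiable ℝ f)
    (hK : ∀ y, ‖gradient f y - gradient f x‖ ≤ K * ‖y - x‖) (y : E) :
    |f y - f x - ⟪gradient f x, y - x⟫| ≤ K / 2 * ‖y - x‖ ^ 2 := by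
  rw [inner_gradient_left]
  refine norm_sub_sub_fderiv_apply_le hf (fun z ↦ ?_) y
  rw [← toDual_gradient, ← toDual_gradient, ← map_sub, LinearIsometryEquiv.norm_map]
  exact hK z

theorem le_add_inner_add_of_norm_sub_gradient_le (hf : Differentiable ℝ f)
    (hK : ∀ y, ‖gradient f y - gradient f x‖ ≤ K * ‖y - x‖) {g : E} {δ : ℝ}
    (hg : ‖g - gradient f x‖ ≤ δ) (y : E) :
    f y ≤ f x + ⟪g, y - x⟫ + δ * ‖y - x‖ + K / 2 * ‖y - x‖ ^ 2 := by
  have taylor := (abs_le.1 (abs_sub_sub_inner_gradient_le hf hK y)).2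
  have inner_error : -⟪g - gradient f x, y - x⟫ ≤ δ * ‖y - x‖ :=
    calc -⟪g - gradient f x, y - x⟫ ≤ ‖g - gradient f x‖ * ‖y - x‖ :=
          (neg_le_abs _).trans (abs_real_inner_le_norm _ _)
      _ ≤ δ * ‖y - x‖ := by gcongr
  rw [inner_sub_left] at inner_error
  linarith

end Taylor

theorem euclideanSpace_norm_le_sqrt_card_mul {ι : Type*} [Fintype ι] {v : EuclideanSpace ℝ ι}
    {C : ℝ} (h : ∀ j, |v j| ≤ C) : ‖v‖ ≤ √(Fintype.card ι) * C := by
  cases isEmpty_or_nonempty ι with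
  | inl _ => simp [EuclideanSpace.norm_eq]
  | inr hι =>
    have hC : 0 ≤ C := (abs_nonneg _).trans (h hι.some)
    calc ‖v‖ = √(∑ j, |v j| ^ 2) := EuclideanSpace.norm_eq v
      _ ≤ √(∑ _j : ι, C ^ 2) := by gcongr with j; exact h j
      _ = √(Fintype.card ι) * C := by simp [Real.sqrt_sq hC]

section ForwardDifference

variable {d : ℕ} {f : EuclideanSpace ℝ (Fin d) → ℝ} {x₀ : EuclideanSpace ℝ (Fin d)} {K ν : ℝ}

theorem fdGrad_apply (f : EuclideanSpace ℝ (Fin d) → ℝ) (x : EuclideanSpace ℝ (Fin d)) (ν : ℝ)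
    (j : Fin d) :
    fdGrad d f x ν j = (f (x + ν • EuclideanSpace.single j (1 : ℝ)) - f x) / ν := by
  simp [fdGrad, Pi.single_apply]

theorem abs_fdGrad_sub_gradient_apply_le (hf : Differentiable ℝ f)
    (hK : ∀ y, ‖gradient f y - gradient f x₀‖ ≤ K * ‖y - x₀‖) (hν : 0 < ν) (j : Fin d) :
    |(fdGrad d f x₀ ν - gradient f x₀) j| ≤ K / 2 * ν := by
  set y := x₀ + ν • EuclideanSpace.single j (1 : ℝ) with hy
  have taylor : |f y - f x₀ - ν * gradient f x₀ j| ≤ K / 2 * ν ^ 2 := by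
    simpa [hy, norm_smul, inner_smul_right, EuclideanSpace.inner_single_right,
      -inner_gradient_left] using abs_sub_sub_inner_gradient_le hf hK y
  calc |(fdGrad d f x₀ ν - gradient f x₀) j| = |f y - f x₀ - ν * gradient f x₀ j| / ν := by
        rw [PiLp.sub_apply, fdGrad_apply, ← hy, div_sub' hν.ne', abs_div, abs_of_pos hν]
    _ ≤ K / 2 * ν ^ 2 / ν := by gcongr
    _ = K / 2 * ν := by field_simp

theorem norm_fdGrad_sub_gradient_le (hf : Differentiable ℝ f)
    (hK : ∀ y, ‖gradient f y - gradient f x₀‖ ≤ K * ‖y - x₀‖) (hν : 0 < ν) :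
    ‖fdGrad d f x₀ ν - gradient f x₀‖ ≤ √d * (K / 2 * ν) := by
  simpa using euclideanSpace_norm_le_sqrt_card_mul (abs_fdGrad_sub_gradient_apply_le hf hK hν)

theorem le_add_inner_fdGrad_add (hf : Differentiable ℝ f)
    (hK : ∀ y, ‖gradient f y - gradient f x₀‖ ≤ K * ‖y - x₀‖) (hν : 0 < ν)
    {x : EuclideanSpace ℝ (Fin d)} (hx : x ≠ x₀) (hfar : √d * ν / 2 ≤ ‖x - x₀‖) :
    f x ≤ f x₀ + ⟪fdGrad d f x₀ ν, x - x₀⟫ + 3 / 2 * K * ‖x - x₀‖ ^ 2 := by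
  have hK₀ : 0 ≤ K := nonneg_of_norm_sub_le_mul_norm_sub hx (hK x)
  have fdGrad_error : ‖fdGrad d f x₀ ν - gradient f x₀‖ ≤ K * ‖x - x₀‖ :=
    calc ‖fdGrad d f x₀ ν - gradient f x₀‖ ≤ √d * (K / 2 * ν) :=
          norm_fdGrad_sub_gradient_le hf hK hν
      _ = K * (√d * ν / 2) := by ring
      _ ≤ K * ‖x - x₀‖ := by gcongr
  linarith [le_add_inner_add_of_norm_sub_gradient_le hf hK fdGrad_error x]

theorem neg_of_fdGrad_model_nonpos {L M : ℝ} (hf : Differentiable ℝ f)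
    (hL : ∀ y, |f y - f x₀| ≤ L * ‖y - x₀‖)
    (hK : ∀ y, ‖gradient f y - gradient f x₀‖ ≤ K * ‖y - x₀‖)
    (hL₀ : 0 < L) (hKM : 3 * K < 4 * M) (hx₀ : f x₀ < 0) (hν : 0 < ν)
    (hstep : √d * ν / 2 ≤ -f x₀ / L) {x : EuclideanSpace ℝ (Fin d)}
    (hx : f x₀ + ⟪fdGrad d f x₀ ν, x - x₀⟫ + 2 * M * ‖x - x₀‖ ^ 2 ≤ 0) : f x < 0 := by
  rcases eq_or_ne x x₀ with rfl | hne
  · exact hx₀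
  rcases lt_or_ge ‖x - x₀‖ (√d * ν / 2) with hnear | hfar
  · have lipschitz_decrease : L * ‖x - x₀‖ < -f x₀ := (lt_div_iff₀' hL₀).1 (hnear.trans_le hstep)
    linarith [(le_abs_self _).trans (hL x)]
  · have hpos : 0 < ‖x - x₀‖ ^ 2 := pow_pos (norm_sub_pos_iff.2 hne) 2
    calc f x ≤ f x₀ + ⟪fdGrad d f x₀ ν, x - x₀⟫ + 3 / 2 * K * ‖x - x₀‖ ^ 2 :=
          le_add_inner_fdGrad_add hf hK hν hne hfar
      _ < f x₀ + ⟪fdGrad d f x₀ ν, x - x₀⟫ + 2 * M * ‖x - x₀‖ ^ 2 := by gcongr 2; linarith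
      _ ≤ 0 := hx

end ForwardDifference

theorem stmt4_general {ι : Type*} {d : ℕ} (hd : 1 ≤ d) {f : ι → EuclideanSpace ℝ (Fin d) → ℝ}
    {K M : ι → ℝ} {L : ℝ} {x₀ : EuclideanSpace ℝ (Fin d)} (hf : ∀ i, Differentiable ℝ (f i))
    (hL : ∀ i x, |f i x - f i x₀| ≤ L * ‖x - x₀‖)
    (hK : ∀ i x, ‖gradient (f i) x - gradient (f i) x₀‖ ≤ K i * ‖x - x₀‖)
    (hKM : ∀ i, 3 * K i < 4 * M i) (hx₀ : ∀ i, f i x₀ < 0) {ν : ℝ} (hν : 0 < ν)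
    (hstep : ν ≤ 2 * (⨅ i, -f i x₀ / L) / √d) :
    ∀ x ∈ ⋂ i, {x : EuclideanSpace ℝ (Fin d) |
        f i x₀ + ⟪fdGrad d (f i) x₀ ν, x - x₀⟫ + 2 * M i * ‖x - x₀‖ ^ 2 ≤ 0},
      ∀ i, f i x < 0 := by
  intro x hx i
  have : NeZero d := ⟨by lia⟩
  obtain ⟨y, hy⟩ := exists_ne x₀
  have hL_nonneg : 0 ≤ L := nonneg_of_norm_sub_le_mul_norm_sub (g := f i) hy (hL i y)
  have hsqrt : 0 < √(d : ℝ) := Real.sqrt_pos.2 (by exact_mod_cast hd)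
  have iInf_le : ⨅ i, -f i x₀ / L ≤ -f i x₀ / L :=
    ciInf_le ⟨0, Set.forall_mem_range.2 fun k ↦ div_nonneg (neg_pos.2 (hx₀ k)).le hL_nonneg⟩ i
  have hstep_i : √d * ν / 2 ≤ -f i x₀ / L := by
    linarith [(le_div_iff₀' hsqrt).1 hstep]
  have hL_pos : 0 < L := by
    refine hL_nonneg.lt_of_ne' fun hL_zero ↦ ?_
    rw [hL_zero, div_zero] at hstep_i
    linarith [mul_pos hsqrt hν]
  exact neg_of_fdGrad_model_nonpos (hf i) (hL i) (hK i) hL_pos (hKM i) (hx₀ i) hν hstep_i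
    (Set.mem_iInter.1 hx i)

theorem stmt4 (d m : ℕ) (hd : 1 ≤ d) [NeZero m]
    (f : Fin m → EuclideanSpace ℝ (Fin d) → ℝ) (L Minf M : Fin m → ℝ) (Lmax : ℝ)
    (hdiff : ∀ i, Differentiable ℝ (f i))
    (hL : ∀ i x₁ x₂, |f i x₁ - f i x₂| ≤ L i * ‖x₁ - x₂‖)
    (hMinf : ∀ i x₁ x₂, ‖gradient (f i) x₁ - gradient (f i) x₂‖ ≤ Minf i * ‖x₁ - x₂‖)
    (hLmax : ∀ i, L i ≤ Lmax)
    (hM : ∀ i, Minf i < M i)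
    (x₀ : EuclideanSpace ℝ (Fin d)) (hx₀ : ∀ i, f i x₀ < 0)
    (lstar : ℝ) (hlstar : lstar = ⨅ i, (-(f i x₀)) / Lmax)
    (ν : ℝ) (hν : 0 < ν) (hν' : ν ≤ 2 * lstar / Real.sqrt d) :
    ∀ x ∈ ⋂ i, {x : EuclideanSpace ℝ (Fin d) |
        f i x₀ + ⟪fdGrad d (f i) x₀ ν, x - x₀⟫ + 2 * M i * ‖x - x₀‖ ^ 2 ≤ 0},
      ∀ i, f i x < 0 := by
  have : NeZero d := ⟨by lia⟩
  obtain ⟨y, hy⟩ := exists_ne x₀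
  have hMinf_nonneg (i) : 0 ≤ Minf i := nonneg_of_norm_sub_le_mul_norm_sub hy (hMinf i y x₀)
  exact stmt4_general hd hdiff
    (fun i x ↦ (hL i x x₀).trans (mul_le_mul_of_nonneg_right (hLmax i) (norm_nonneg _)))
    (fun i x ↦ hMinf i x x₀) (fun i ↦ by linarith [hM i, hMinf_nonneg i]) hx₀ hν (hlstar ▸ hν')
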